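/- arXiv:2209.08658 — 2 statements merged into one kernel-verified Lean document; each statement's English description precedes it below -/
import Mathlib

section
/- Let C be an abelian category with Ext groups, let S be a thick class of objects (closed under extensions, direct summands, cones and cocones), and let (F,G) be a 1-cotorsion pair cut on Thick(F) such that Ext^i(A,B)=0 for all A∈F, B∈G and all i≥1. If F∩G∩S is both a generator and a cogenerator in F∩G, then (F, F∩G) is a left Frobenius pair cut on S. -/
/-!
Write `T` for the thick closure of `F`. Splitting the approximation `0 ⟶ K ⟶ A ⟶ t ⟶ 0` of an object
`t` of `T` shows that `F` consists of those `t ∈ T` with `Ext¹(t, V) = 0` for every `V ∈ G`; together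
with the vanishing of `Ext²(F, G)` and the long exact sequences this makes `F` left thick.
Dually, a `t ∈ T` with `Ext¹(U, t) = 0` for every `U ∈ F` lies in `G`, so `F ∩ G` is closed under
extensions.

For the embedding axiom of the Frobenius pair `(F ∩ S, F ∩ G ∩ S)`, an object `A ∈ F ∩ S` embeds in
some `B ∈ G` with cokernel in `F`; then `B ∈ F ∩ G`, so `B` embeds in some `L ∈ F ∩ G ∩ S` with
cokernel in `F`. The cokernel of the composite `A ⟶ L` is an extension of the two cokernels, hence
in `F`, and it is a cone of objects of `S`, hence in `S`. The remaining axioms are formal.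
-/


open CategoryTheory

universe w v u

variable {C : Type u} [Category.{v} C] [Abelian C]

/-- `IsSES A B X` : there is a short exact sequence `0 → A → B → X → 0` in `C`. -/
def IsSES (A B X : C) : Prop :=
  ∃ (f : A ⟶ B) (g : B ⟶ X) (zero : f ≫ g = 0),
    (ShortComplex.mk f g zero).ShortExact

/-- `P` is closed under extensions. -/
def ClosedUnderExtensions (P : C → Prop) : Prop :=
  ∀ ⦃A B X : C⦄, IsSES A B X → P A → P X → P B

/-- `P` is closed under cones. -/
def ClosedUnderCones (P : C → Prop) : Prop :=
  ∀ ⦃A B X : C⦄, IsSES A B X → P A → P B → P X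

/-- `P` is closed under cocones. -/
def ClosedUnderCocones (P : C → Prop) : Prop :=
  ∀ ⦃A B X : C⦄, IsSES A B X → P B → P X → P A

/-- `P` is closed under isomorphisms. -/
def ClosedUnderIsos (P : C → Prop) : Prop :=
  ∀ ⦃X Y : C⦄, (X ≅ Y) → P X → P Y

/-- `P` is closed under direct summands. -/
def ClosedUnderSummands (P : C → Prop) : Prop :=
  ∀ ⦃X Y : C⦄, P X → (∃ (i : Y ⟶ X) (r : X ⟶ Y), i ≫ r = 𝟙 Y) → P Y

/-- `HasResLength P n M` : there is an exact sequence `0 → W_n → ⋯ → W_0 → M → 0`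
with all `W_i` in `P`. -/
inductive HasResLength (P : C → Prop) : ℕ → C → Prop
  | of_iso {M W : C} (hW : P W) (e : M ≅ W) : HasResLength P 0 M
  | step {K W M : C} {n : ℕ} (hW : P W) (h : IsSES K W M)
      (hK : HasResLength P n K) : HasResLength P (n + 1) M

/-- `P^∧` : the class of objects admitting a finite `P`-resolution. -/
def ResClass (P : C → Prop) : C → Prop := fun M => ∃ n, HasResLength P n M

/-- The resolution dimension `resdim_P(M) ∈ ℕ∞`. -/
noncomputable def resDim (P : C → Prop) (M : C) : ℕ∞ :=
  sInf {n : ℕ∞ | ∃ m : ℕ, n = (m : ℕ∞) ∧ HasResLength P m M}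

/-- `HasCoresLength P n M` : there is an exact sequence `0 → M → W_0 → ⋯ → W_n → 0`
with all `W_i` in `P`. -/
inductive HasCoresLength (P : C → Prop) : ℕ → C → Prop
  | of_iso {M W : C} (hW : P W) (e : M ≅ W) : HasCoresLength P 0 M
  | step {M W K : C} {n : ℕ} (hW : P W) (h : IsSES M W K)
      (hK : HasCoresLength P n K) : HasCoresLength P (n + 1) M

/-- `ω ∩ S` is a relative generator in `ω` : every `W ∈ ω` fits in a short exact
sequence `0 → W' → F → W → 0` with `F ∈ ω ∩ S` and `W' ∈ ω`. -/
def RelGenerator (ω S : C → Prop) : Prop :=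
  ∀ ⦃W : C⦄, ω W → ∃ (W' F : C), ω W' ∧ (ω F ∧ S F) ∧ IsSES W' F W

/-- `P` is left thick : closed under extensions, direct summands and cocones. -/
def LeftThick (P : C → Prop) : Prop :=
  ClosedUnderExtensions P ∧ ClosedUnderSummands P ∧ ClosedUnderCocones P

/-- `P` is right thick : closed under extensions, direct summands and cones. -/
def RightThick (P : C → Prop) : Prop :=
  ClosedUnderExtensions P ∧ ClosedUnderSummands P ∧ ClosedUnderCones P

/-- The smallest thick class (closed under extensions, direct summands, cones and
cocones) containing `P`. -/
inductive ThickClosure (P : C → Prop) : C → Prop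
  | of {M : C} (h : P M) : ThickClosure P M
  | ext {A B X : C} (h : IsSES A B X) (hA : ThickClosure P A) (hX : ThickClosure P X) :
      ThickClosure P B
  | cone {A B X : C} (h : IsSES A B X) (hA : ThickClosure P A) (hB : ThickClosure P B) :
      ThickClosure P X
  | cocone {A B X : C} (h : IsSES A B X) (hB : ThickClosure P B) (hX : ThickClosure P X) :
      ThickClosure P A
  | summand {X Y : C} (hX : ThickClosure P X) (i : Y ⟶ X) (r : X ⟶ Y) (hir : i ≫ r = 𝟙 Y) :
      ThickClosure P Y

section WithExt

variable [HasExt.{w} C]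

/-- `Ext^i(A, B) = 0` for all `A ∈ P`, `B ∈ Q` and all `i ≥ 1`. -/
def ExtVanish (P Q : C → Prop) : Prop :=
  ∀ ⦃A B : C⦄, P A → Q B → ∀ i : ℕ, 1 ≤ i → Subsingleton (Abelian.Ext A B i)

/-- `(X, ω)` is a left Frobenius pair in `C`. -/
def IsLeftFrobenius (X ω : C → Prop) : Prop :=
  LeftThick X ∧ (∀ ⦃W : C⦄, ω W → X W) ∧ ClosedUnderSummands ω ∧
    ExtVanish X ω ∧
    (∀ ⦃A : C⦄, X A → ∃ (W A' : C), ω W ∧ X A' ∧ IsSES A W A')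

/-- `(X, ω)` is a left Frobenius pair cut on `S`. -/
def IsLeftFrobeniusCut (X ω S : C → Prop) : Prop :=
  LeftThick X ∧
  IsLeftFrobenius (fun M => X M ∧ S M) (fun M => ω M ∧ S M) ∧
  (ExtVanish (fun M => ω M ∧ S M) ω ∧ RelGenerator ω S) ∧
  (ClosedUnderExtensions ω ∧ ClosedUnderSummands ω)

/-- `(A, B)` is a left weak AB context cut on `S`. -/
def IsLeftWeakABCut (A B S : C → Prop) : Prop :=
  IsLeftFrobeniusCut A (fun M => A M ∧ B M) S ∧
  RightThick (fun M => B M ∧ S M) ∧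
  (∀ ⦃M : C⦄, B M → S M → ResClass (fun N => A N ∧ S N) M)

/-- `(U, V)` is a left 1-cotorsion pair cut on `T`. -/
def IsLeft1CotorsionCut (U V T : C → Prop) : Prop :=
  ClosedUnderSummands U ∧
  (∀ ⦃A B : C⦄, U A → T A → V B → Subsingleton (Abelian.Ext A B 1)) ∧
  (∀ ⦃t : C⦄, T t → ∃ (K A : C), U A ∧ (∃ V' : C, V V' ∧ Nonempty (K ≅ V')) ∧ IsSES K A t)

/-- `(U, V)` is a right 1-cotorsion pair cut on `T`. -/
def IsRight1CotorsionCut (U V T : C → Prop) : Prop :=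
  ClosedUnderSummands V ∧
  (∀ ⦃A B : C⦄, U A → V B → T B → Subsingleton (Abelian.Ext A B 1)) ∧
  (∀ ⦃t : C⦄, T t → ∃ (B W : C), V B ∧ (∃ U' : C, U U' ∧ Nonempty (W ≅ U')) ∧ IsSES t B W)

/-- `(U, V)` is a 1-cotorsion pair cut on `T`. -/
def Is1CotorsionCut (U V T : C → Prop) : Prop :=
  IsLeft1CotorsionCut U V T ∧ IsRight1CotorsionCut U V T

/-- `(A, B)` is a left `n`-cotorsion pair cut on `S`. -/
def IsLeftNCotorsionCut (n : ℕ) (A B S : C → Prop) : Prop :=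
  ClosedUnderSummands A ∧
  (∀ ⦃X Y : C⦄, A X → S X → B Y → ∀ i : ℕ, 1 ≤ i → i ≤ n → Subsingleton (Abelian.Ext X Y i)) ∧
  (∀ ⦃s : C⦄, S s → ∃ (K X : C), A X ∧ (∃ m : ℕ, m ≤ n - 1 ∧ HasResLength B m K) ∧ IsSES K X s)

/-- `(A, B)` is a right `n`-cotorsion pair cut on `S`. -/
def IsRightNCotorsionCut (n : ℕ) (A B S : C → Prop) : Prop :=
  ClosedUnderSummands B ∧
  (∀ ⦃X Y : C⦄, A X → B Y → S Y → ∀ i : ℕ, 1 ≤ i → i ≤ n → Subsingleton (Abelian.Ext X Y i)) ∧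
  (∀ ⦃s : C⦄, S s → ∃ (Y W : C), B Y ∧ (∃ m : ℕ, m ≤ n - 1 ∧ HasCoresLength A m W) ∧ IsSES s Y W)

/-- `(F, G)` is a complete cotorsion pair in `T`. -/
def IsCompleteCotorsionPairIn (T F G : C → Prop) : Prop :=
  (∀ ⦃M : C⦄, F M → T M) ∧ (∀ ⦃M : C⦄, G M → T M) ∧
  ClosedUnderSummands F ∧ ClosedUnderSummands G ∧
  (∀ ⦃A B : C⦄, F A → G B → Subsingleton (Abelian.Ext A B 1)) ∧
  (∀ ⦃M : C⦄, T M →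
    (∃ G₁ F₁ : C, G G₁ ∧ F F₁ ∧ IsSES G₁ F₁ M) ∧
    (∃ G₂ F₂ : C, G G₂ ∧ F F₂ ∧ IsSES M G₂ F₂))

end WithExt

section Helpers

open Abelian

lemma ClosedUnderSummands.of_iso {P : C → Prop} (hP : ClosedUnderSummands P) {X Y : C}
    (e : X ≅ Y) (hY : P Y) : P X :=
  hP hY ⟨e.hom, e.inv, e.hom_inv_id⟩

section Splitting

variable [HasExt.{w} C]

lemma IsSES.exists_section {A B X : C} (h : IsSES A B X) (hE : Subsingleton (Ext X A 1)) :
    ∃ (i : X ⟶ B) (r : B ⟶ X), i ≫ r = 𝟙 X := by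
  obtain ⟨f, g, zero, hS⟩ := h
  obtain ⟨s, hs⟩ := Ext.covariant_sequence_exact₃ X hS (Ext.mk₀ (𝟙 X)) (zero_add 1)
    (hE.elim _ _)
  obtain ⟨s, rfl⟩ := Ext.homEquiv₀.symm.surjective s
  refine ⟨s, g, ?_⟩
  apply Ext.homEquiv₀.symm.injective
  simpa using hs

lemma IsSES.exists_retraction {A B X : C} (h : IsSES A B X) (hE : Subsingleton (Ext X A 1)) :
    ∃ (i : A ⟶ B) (r : B ⟶ A), i ≫ r = 𝟙 A := by
  obtain ⟨f, g, zero, hS⟩ := h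
  obtain ⟨s, hs⟩ := Ext.contravariant_sequence_exact₁ hS A (Ext.mk₀ (𝟙 A)) (add_zero 1)
    (hE.elim _ _)
  obtain ⟨s, rfl⟩ := Ext.homEquiv₀.symm.surjective s
  refine ⟨f, s, ?_⟩
  apply Ext.homEquiv₀.symm.injective
  simpa using hs

lemma IsSES.subsingleton_ext_middle_left {A B X : C} (h : IsSES A B X) {Y : C} {n : ℕ}
    (hA : Subsingleton (Ext A Y n)) (hX : Subsingleton (Ext X Y n)) :
    Subsingleton (Ext B Y n) := by
  obtain ⟨f, g, zero, hS⟩ := h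
  refine subsingleton_of_forall_eq 0 fun x => ?_
  obtain ⟨y, hy⟩ := Ext.contravariant_sequence_exact₂ hS Y x (hA.elim _ _)
  rw [← hy, hX.elim y 0, Ext.comp_zero]

lemma IsSES.subsingleton_ext_middle_right {A B X : C} (h : IsSES A B X) {Y : C} {n : ℕ}
    (hA : Subsingleton (Ext Y A n)) (hX : Subsingleton (Ext Y X n)) :
    Subsingleton (Ext Y B n) := by
  obtain ⟨f, g, zero, hS⟩ := h
  refine subsingleton_of_forall_eq 0 fun x => ?_
  obtain ⟨y, hy⟩ := Ext.covariant_sequence_exact₂ Y hS x (hX.elim _ _)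
  rw [← hy, hA.elim y 0, Ext.zero_comp]

/-- Dimension shifting `Ext¹(B, Y) ⟶ Ext¹(A, Y) ⟶ Ext²(X, Y)`. -/
lemma IsSES.subsingleton_ext_left {A B X : C} (h : IsSES A B X) {Y : C}
    (hB : Subsingleton (Ext B Y 1)) (hX : Subsingleton (Ext X Y 2)) :
    Subsingleton (Ext A Y 1) := by
  obtain ⟨f, g, zero, hS⟩ := h
  refine subsingleton_of_forall_eq 0 fun x => ?_
  obtain ⟨y, hy⟩ := Ext.contravariant_sequence_exact₁ hS Y x (n₁ := 2) rfl (hX.elim _ _)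
  rw [← hy, hB.elim y 0, Ext.comp_zero]

end Splitting

/-- The third isomorphism theorem, `(L/A)/(B/A) ≅ L/B`, for a composite of monomorphisms
`A ⟶ B ⟶ L`. -/
lemma IsSES.comp {A B W L W'' : C} (h₁ : IsSES A B W) (h₂ : IsSES B L W'') :
    ∃ X : C, IsSES A L X ∧ IsSES W X W'' := by
  obtain ⟨f, p, zero₁, hS₁⟩ := h₁
  obtain ⟨g, q, zero₂, hS₂⟩ := h₂
  have : Mono f := hS₁.mono_f
  have : Epi p := hS₁.epi_g
  have : Mono g := hS₂.mono_f
  have : Epi q := hS₂.epi_g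
  let π := Limits.cokernel.π (f ≫ g)
  have hπ : (f ≫ g) ≫ π = 0 := Limits.cokernel.condition _
  have exπ : (ShortComplex.mk _ _ hπ).Exact :=
    ShortComplex.exact_of_g_is_cokernel _ (Limits.cokernelIsCokernel _)
  let a : W ⟶ Limits.cokernel (f ≫ g) := hS₁.exact.desc (g ≫ π) (by simpa using hπ)
  have ha : p ≫ a = g ≫ π := hS₁.exact.g_desc _ _
  let b : Limits.cokernel (f ≫ g) ⟶ W'' := Limits.cokernel.desc _ q (by simp [zero₂])
  have hb : π ≫ b = q := Limits.cokernel.π_desc _ _ _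
  have hab : a ≫ b = 0 := by
    rw [← cancel_epi p, reassoc_of% ha, hb, zero₂, Limits.comp_zero]
  refine ⟨Limits.cokernel (f ≫ g), ⟨f ≫ g, π, hπ, ?_⟩, ⟨a, b, hab, ?_⟩⟩
  · exact { exact := exπ
            mono_f := by dsimp; infer_instance
            epi_g := by dsimp [π]; infer_instance }
  · refine { exact := ?_, mono_f := ?_, epi_g := ?_ }
    · rw [ShortComplex.exact_iff_exact_up_to_refinements]
      intro T x hx
      dsimp at x hx
      obtain ⟨T₁, e₁, _, l, hl⟩ := surjective_up_to_refinements_of_epi π x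
      have hlq : l ≫ q = 0 := by
        rw [← hb, ← reassoc_of% hl, hx, Limits.comp_zero]
      refine ⟨T₁, e₁, inferInstance, hS₂.exact.lift l hlq ≫ p, ?_⟩
      have := hS₂.exact.lift_f l hlq
      dsimp at this ⊢
      rw [hl, Category.assoc, ha, reassoc_of% this]
    · dsimp
      refine Preadditive.mono_of_cancel_zero _ fun {T} w hw => ?_
      obtain ⟨T₁, e₁, _, y, hy⟩ := surjective_up_to_refinements_of_epi p w
      have hyg : (y ≫ g) ≫ π = 0 := by
        rw [Category.assoc, ← ha, ← reassoc_of% hy, hw, Limits.comp_zero]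
      have hc := exπ.lift_f (y ≫ g) hyg
      dsimp at hc
      rw [← Category.assoc, cancel_mono] at hc
      rw [← cancel_epi e₁, hy, ← hc, Category.assoc, zero₁, Limits.comp_zero, Limits.comp_zero]
    · exact epi_of_epi_fac hb

section Cotorsion

variable [HasExt.{w} C] {F G : C → Prop}

lemma Is1CotorsionCut.left_of_ext (h : Is1CotorsionCut F G (ThickClosure F)) {t : C}
    (ht : ThickClosure F t) (hE : ∀ V : C, G V → Subsingleton (Ext t V 1)) : F t := by
  obtain ⟨K, A, hA, ⟨V, hV, ⟨e⟩⟩, hs⟩ := h.1.2.2 ht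
  exact h.1.1 hA (hs.exists_section (hE K (h.2.1.of_iso e hV)))

lemma Is1CotorsionCut.right_of_ext (h : Is1CotorsionCut F G (ThickClosure F)) {t : C}
    (ht : ThickClosure F t) (hE : ∀ U : C, F U → Subsingleton (Ext U t 1)) : G t := by
  obtain ⟨B, W, hB, ⟨U, hU, ⟨e⟩⟩, hs⟩ := h.2.2.2 ht
  exact h.2.1 hB (hs.exists_retraction (hE W (h.1.1.of_iso e hU)))

lemma Is1CotorsionCut.leftThick (h : Is1CotorsionCut F G (ThickClosure F))
    (hvan : ExtVanish F G) : LeftThick F := by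
  refine ⟨fun A B X hs hA hX => ?_, h.1.1, fun A B X hs hB hX => ?_⟩
  · exact h.left_of_ext (.ext hs (.of hA) (.of hX)) fun V hV =>
      hs.subsingleton_ext_middle_left (hvan hA hV 1 le_rfl) (hvan hX hV 1 le_rfl)
  · exact h.left_of_ext (.cocone hs (.of hB) (.of hX)) fun V hV =>
      hs.subsingleton_ext_left (hvan hB hV 1 le_rfl) (hvan hX hV 2 one_le_two)

end Cotorsion


end Helpers

theorem stmt_13 [HasExt.{w} C] (F G S : C → Prop)
    (hSext : ClosedUnderExtensions S) (hSsum : ClosedUnderSummands S)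
    (hScone : ClosedUnderCones S) (hScocone : ClosedUnderCocones S)
    (h : Is1CotorsionCut F G (ThickClosure F))
    (hvan : ExtVanish F G)
    (hgen : ∀ ⦃W : C⦄, F W ∧ G W →
      ∃ (W' L : C), (F W' ∧ G W') ∧ ((F L ∧ G L) ∧ S L) ∧ IsSES W' L W)
    (hcogen : ∀ ⦃W : C⦄, F W ∧ G W →
      ∃ (L W'' : C), ((F L ∧ G L) ∧ S L) ∧ (F W'' ∧ G W'') ∧ IsSES W L W'') :
    IsLeftFrobeniusCut F (fun M => F M ∧ G M) S := by
  have hF : LeftThick F := h.leftThick hvan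
  refine ⟨hF, ⟨⟨?_, ?_, ?_⟩, ?_, ?_, ?_, ?_⟩, ⟨?_, ?_⟩, ?_, ?_⟩
  · exact fun A B X hs hA hX => ⟨hF.1 hs hA.1 hX.1, hSext hs hA.2 hX.2⟩
  · exact fun X Y hX hY => ⟨hF.2.1 hX.1 hY, hSsum hX.2 hY⟩
  · exact fun A B X hs hB hX => ⟨hF.2.2 hs hB.1 hX.1, hScocone hs hB.2 hX.2⟩
  · exact fun W hW => ⟨hW.1.1, hW.2⟩
  · exact fun X Y hX hY => ⟨⟨h.1.1 hX.1.1 hY, h.2.1 hX.1.2 hY⟩, hSsum hX.2 hY⟩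
  · exact fun A B hA hB i hi => hvan hA.1 hB.1.2 i hi
  · intro A hA
    obtain ⟨B, W, hB, ⟨U, hU, ⟨e⟩⟩, hs⟩ := h.2.2.2 (.of hA.1)
    have hW : F W := h.1.1.of_iso e hU
    obtain ⟨L, W'', hL, hW'', hs'⟩ := hcogen ⟨hF.1 hs hA.1 hW, hB⟩
    obtain ⟨X, hX, hX'⟩ := hs.comp hs'
    exact ⟨L, X, hL, ⟨hF.1 hX' hW hW''.1, hScone hX hA.2 hL.2⟩, hX⟩
  · exact fun A B hA hB i hi => hvan hA.1.1 hB.2 i hi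
  · exact hgen
  · intro A B X hs hA hX
    have hB : F B := hF.1 hs hA.1 hX.1
    exact ⟨hB, h.right_of_ext (.of hB) fun U hU =>
      hs.subsingleton_ext_middle_right (hvan hU hA.2 1 le_rfl) (hvan hU hX.2 1 le_rfl)⟩
  · exact fun X Y hX hY => ⟨h.1.1 hX.1 hY, h.2.1 hX.2 hY⟩
end

section
/- Let C be an abelian category with Ext groups and let (X,ω) be a left Frobenius pair in C. Then (X, ω^∧) is a complete cotorsion pair in Thick(X), Ext^i(A,M)=0 for all A∈X, M∈ω^∧ and all i≥1, and X∩ω^∧ = ω. -/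
/-!
The theorem is Auslander–Buchweitz approximation theory for a left Frobenius pair `(𝒳, ω)`.

Call `M` approximable (`HasApprox`) if there is a short exact sequence `0 → Y → X → M → 0` with
`X ∈ 𝒳` and `Y ∈ ω^∧`. Dimension shifting along `ω`-resolutions gives `Ext^i(𝒳, ω^∧) = 0` for
`i ≥ 1` (`ext_res`). Since `ω` cogenerates `𝒳`, an object `M ∈ 𝒳` with `Ext^1(𝒳, M) = 0` is a
direct summand of an object of `ω`, hence lies in `ω` (`mem_of_ext`); this gives `𝒳 ∩ ω^∧ = ω`.
Embedding `X` into an object of `ω` and passing to the quotient by `Y` turns an approximation of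
`M` into a sequence `0 → M → Y' → X' → 0` with `Y' ∈ ω^∧` and `X' ∈ 𝒳` (`coapprox`), which is the
second sequence required of a complete cotorsion pair. It remains to see that every object of the
thick closure of `𝒳` is approximable, that is, that the approximable objects form a thick class.

Closure under extensions, cones and cocones is obtained from pullbacks, pushouts and composites of
short exact sequences, using that `ω^∧` is closed under extensions (`res_ext`). For direct summands
(`approx_biprod`), every approximable `Z` has an `n` with `Ext^i(Z, ω) = 0` for all `i > n`
(`exists_ext_bound`), and one argues by induction on `n`. If `n = 0`, an approximation of `Z`
splits, so `Z` and its summands lie in `𝒳`. If `Z = M ⊞ N`, an approximation `X → Z` yields epimorphisms `X → M` and `X → N` with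
kernels `M₁` and `N₁`; then `M₁ ⊞ N₁` is approximable with smaller `n`, so `M₁` is approximable by
induction, and so is the cone `M` of `M₁ → X`.

Finally, an approximable `M` with `Ext^1(𝒳, M) = 0` lies in `ω^∧` (`res_of_ext`), so that `ω^∧` is
closed under direct summands.
-/

open CategoryTheory

universe w v u

variable {C : Type u} [Category.{v} C] [Abelian C]

/-! ### Calculus of short exact sequences -/

open Limits in
/-- A criterion for short exactness in which exactness in the middle is the factorization
property of a kernel. -/
lemma IsSES.of_lift {A B M : C} (f : A ⟶ B) (g : B ⟶ M) [Mono f] [Epi g] (zero : f ≫ g = 0)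
    (hl : ∀ ⦃T : C⦄ (k : T ⟶ B), k ≫ g = 0 → ∃ l : T ⟶ A, l ≫ f = k) : IsSES A B M := by
  refine ⟨f, g, zero, ShortComplex.ShortExact.mk' ?_ ‹_› ‹_›⟩
  choose l hl' using hl
  exact ShortComplex.exact_of_f_is_kernel _
    (KernelFork.IsLimit.ofι _ zero (fun k hk => l k hk) (fun k hk => hl' k hk)
      (fun k hk m hm => by rw [← cancel_mono f, hl' k hk, hm]))

lemma ses_lift {S : ShortComplex C} (hS : S.ShortExact) {T : C} (k : T ⟶ S.X₂)
    (hk : k ≫ S.g = 0) : ∃ l : T ⟶ S.X₁, l ≫ S.f = k := by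
  have := hS.mono_f
  exact ⟨hS.exact.lift k hk, hS.exact.lift_f k hk⟩

lemma IsSES.op {A B M : C} (h : IsSES A B M) :
    IsSES (Opposite.op M) (Opposite.op B) (Opposite.op A) := by
  obtain ⟨f, g, zero, hS⟩ := h
  exact ⟨g.op, f.op, by rw [← op_comp, zero, Limits.op_zero], hS.op⟩

lemma IsSES.unop {A B M : Cᵒᵖ} (h : IsSES A B M) : IsSES M.unop B.unop A.unop := by
  obtain ⟨f, g, zero, hS⟩ := h
  exact ⟨g.unop, f.unop, by rw [← unop_comp, zero, Limits.unop_zero], hS.unop⟩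

lemma isSES_zero_left (M : C) {Z : C} (hZ : Limits.IsZero Z) : IsSES Z M M := by
  have : Mono (0 : Z ⟶ M) := ⟨fun _ _ _ => hZ.eq_of_tgt _ _⟩
  refine IsSES.of_lift (0 : Z ⟶ M) (𝟙 M) (by simp) fun T k hk => ⟨0, ?_⟩
  simpa using hk.symm

lemma IsSES.of_iso {A B M B' M' : C} (h : IsSES A B M) (e₂ : B ≅ B') (e₃ : M ≅ M') :
    IsSES A B' M' := by
  obtain ⟨f, g, zero, hS⟩ := h
  have zero' : (f ≫ e₂.hom) ≫ (e₂.inv ≫ g ≫ e₃.hom) = 0 := by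
    rw [Category.assoc, e₂.hom_inv_id_assoc, ← Category.assoc, zero, Limits.zero_comp]
  let e : ShortComplex.mk f g zero ≅ ShortComplex.mk _ _ zero' :=
    ShortComplex.isoMk (Iso.refl _) e₂ e₃ (by simp) (by simp)
  exact ⟨_, _, zero', ShortComplex.shortExact_of_iso e hS⟩

lemma isSES_pullback_snd {S : ShortComplex C} (hS : S.ShortExact) {Z : C} (q : Z ⟶ S.X₃) :
    IsSES S.X₁ (Limits.pullback S.g q) Z := by
  have := hS.mono_f
  have := hS.epi_g
  let i : S.X₁ ⟶ Limits.pullback S.g q := Limits.pullback.lift S.f 0 (by simp)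
  have hi : i ≫ Limits.pullback.fst S.g q = S.f := Limits.pullback.lift_fst _ _ _
  have hi' : i ≫ Limits.pullback.snd S.g q = 0 := Limits.pullback.lift_snd _ _ _
  have : Mono i := mono_of_mono_fac hi
  refine IsSES.of_lift i (Limits.pullback.snd S.g q) hi' fun T k hk => ?_
  obtain ⟨l, hl⟩ := ses_lift hS (k ≫ Limits.pullback.fst S.g q)
    (by rw [Category.assoc, Limits.pullback.condition, ← Category.assoc, hk, Limits.zero_comp])
  refine ⟨l, Limits.pullback.hom_ext ?_ ?_⟩
  · rw [Category.assoc, hi, hl]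
  · rw [Category.assoc, hi', hk, Limits.comp_zero]

/-- The pullback of two epimorphisms `B ⟶ M` and `W ⟶ M`, with both projections. -/
lemma IsSES.pullback {A B K W M : C} (h : IsSES A B M) (h' : IsSES K W M) :
    ∃ P, IsSES K P B ∧ IsSES A P W := by
  obtain ⟨f, g, zero, hS⟩ := h
  obtain ⟨f', g', zero', hS'⟩ := h'
  exact ⟨Limits.pullback g g',
    (isSES_pullback_snd hS' g).of_iso (Limits.pullbackSymmetry g' g) (Iso.refl _),
    isSES_pullback_snd hS g'⟩

/-- The pushout of two monomorphisms `A ⟶ B` and `A ⟶ D`, with both coprojections. -/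
lemma IsSES.pushout {A B M D N : C} (h : IsSES A B M) (h' : IsSES A D N) :
    ∃ P, IsSES B P N ∧ IsSES D P M := by
  obtain ⟨P, h₁, h₂⟩ := h.op.pullback h'.op
  exact ⟨P.unop, h₁.unop, h₂.unop⟩

/-- The kernel `L` of a composite of epimorphisms `B ⟶ M ⟶ N` is an extension of the kernel of
the second by the kernel of the first. -/
lemma IsSES.comp_epi {A B M K N : C} (h : IsSES A B M) (h' : IsSES K M N) :
    ∃ L, IsSES A L K ∧ IsSES L B N := by
  obtain ⟨f, g, zero, hS⟩ := h
  obtain ⟨i, q, zero', hS'⟩ := h'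
  have : Mono i := hS'.mono_f
  have : Epi g := hS.epi_g
  have : Epi q := hS'.epi_g
  refine ⟨Limits.pullback g i, isSES_pullback_snd hS i, ?_⟩
  refine IsSES.of_lift (Limits.pullback.fst g i) (g ≫ q) ?_ fun T k hk => ?_
  · rw [← Category.assoc, Limits.pullback.condition, Category.assoc, zero', Limits.comp_zero]
  · obtain ⟨l, hl⟩ := ses_lift hS' (k ≫ g) (by simpa using hk)
    exact ⟨Limits.pullback.lift k l hl.symm, Limits.pullback.lift_fst _ _ _⟩

/-- The cokernel `Q` of a composite of monomorphisms `A ⟶ B ⟶ D` is an extension of the cokernel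
of the second by the cokernel of the first. -/
lemma IsSES.comp_mono {A B M D N : C} (h : IsSES A B M) (h' : IsSES B D N) :
    ∃ Q, IsSES A D Q ∧ IsSES M Q N := by
  obtain ⟨Q, h₁, h₂⟩ := h'.op.comp_epi h.op
  exact ⟨Q.unop, h₂.unop, h₁.unop⟩

open Limits in
lemma IsSES.biprod {A B M A' B' M' : C} (h : IsSES A B M) (h' : IsSES A' B' M') :
    IsSES (A ⊞ A') (B ⊞ B') (M ⊞ M') := by
  obtain ⟨f, g, zero, hS⟩ := h
  obtain ⟨f', g', zero', hS'⟩ := h'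
  have : Mono f := hS.mono_f
  have : Mono f' := hS'.mono_f
  have : Epi g := hS.epi_g
  have : Epi g' := hS'.epi_g
  refine IsSES.of_lift (biprod.map f f') (biprod.map g g') (by ext <;> simp [zero, zero'])
    fun T k hk => ?_
  obtain ⟨l, hl⟩ := ses_lift hS (k ≫ biprod.fst) (by simpa using hk =≫ biprod.fst)
  obtain ⟨l', hl'⟩ := ses_lift hS' (k ≫ biprod.snd) (by simpa using hk =≫ biprod.snd)
  dsimp at hl hl'
  refine ⟨biprod.lift l l', ?_⟩
  ext <;> simp [hl, hl']

lemma isSES_biprod (M N : C) : IsSES M (M ⊞ N) N :=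
  ⟨Limits.biprod.inl, Limits.biprod.snd, by simp,
    (ShortComplex.Splitting.ofHasBinaryBiproduct M N).shortExact⟩

lemma IsSES.iso_of_section {A B M : C} {f : A ⟶ B} {g : B ⟶ M} {zero : f ≫ g = 0}
    (hS : (ShortComplex.mk f g zero).ShortExact) (s : M ⟶ B) (hs : s ≫ g = 𝟙 M) :
    Nonempty (B ≅ A ⊞ M) := by
  have := hS.mono_f
  exact ⟨(ShortComplex.Splitting.ofExactOfSection _ hS.exact s hs hS.mono_f).isoBinaryBiproduct⟩

/-- A direct summand has a complement: the kernel of the retraction. -/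
lemma exists_complement {Z M : C} (i : M ⟶ Z) (r : Z ⟶ M) (hir : i ≫ r = 𝟙 M) :
    ∃ N : C, Nonempty (Z ≅ M ⊞ N) := by
  have : Epi r := epi_of_epi_fac hir
  have hS : (ShortComplex.mk (Limits.kernel.ι r) r (Limits.kernel.condition r)).ShortExact :=
    ShortComplex.ShortExact.mk' (ShortComplex.exact_kernel r) inferInstance this
  obtain ⟨e⟩ := IsSES.iso_of_section hS i hir
  exact ⟨_, ⟨e ≪≫ Limits.biprod.braiding _ _⟩⟩

/-! ### Vanishing of Ext groups along short exact sequences -/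

section ExtLemmas

variable [HasExt.{w} C]

open Abelian

lemma ext_subsingleton_iff {X Y : C} {n : ℕ} :
    Subsingleton (Ext X Y n) ↔ ∀ x : Ext X Y n, x = 0 :=
  ⟨fun _ x => Subsingleton.elim _ _, fun h => ⟨fun x y => by rw [h x, h y]⟩⟩

lemma IsSES.ext_right₂ {A B M : C} (h : IsSES A B M) {X : C} {i : ℕ}
    (hA : Subsingleton (Ext X A i)) (hM : Subsingleton (Ext X M i)) :
    Subsingleton (Ext X B i) := by
  obtain ⟨f, g, zero, hS⟩ := h
  refine ext_subsingleton_iff.2 fun x => ?_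
  obtain ⟨y, rfl⟩ := Ext.covariant_sequence_exact₂ X hS x (hM.elim _ _)
  rw [ext_subsingleton_iff.1 hA y, Ext.zero_comp]

lemma IsSES.ext_right₃ {A B M : C} (h : IsSES A B M) {X : C} {i : ℕ}
    (hB : Subsingleton (Ext X B i)) (hA : Subsingleton (Ext X A (i + 1))) :
    Subsingleton (Ext X M i) := by
  obtain ⟨f, g, zero, hS⟩ := h
  refine ext_subsingleton_iff.2 fun x => ?_
  obtain ⟨y, rfl⟩ := Ext.covariant_sequence_exact₃ X hS x rfl (hA.elim _ _)
  rw [ext_subsingleton_iff.1 hB y, Ext.zero_comp]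

lemma IsSES.ext_left₃ {A B M : C} (h : IsSES A B M) {Y : C} {i : ℕ}
    (hA : Subsingleton (Ext A Y i)) (hB : Subsingleton (Ext B Y (i + 1))) :
    Subsingleton (Ext M Y (i + 1)) := by
  obtain ⟨f, g, zero, hS⟩ := h
  refine ext_subsingleton_iff.2 fun x => ?_
  obtain ⟨y, rfl⟩ := Ext.contravariant_sequence_exact₃ hS Y x (hB.elim _ _) (add_comm 1 i)
  rw [ext_subsingleton_iff.1 hA y, Ext.comp_zero]

lemma IsSES.ext_left₁ {A B M : C} (h : IsSES A B M) {Y : C} {i : ℕ}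
    (hB : Subsingleton (Ext B Y i)) (hM : Subsingleton (Ext M Y (i + 1))) :
    Subsingleton (Ext A Y i) := by
  obtain ⟨f, g, zero, hS⟩ := h
  refine ext_subsingleton_iff.2 fun x => ?_
  obtain ⟨y, rfl⟩ := Ext.contravariant_sequence_exact₁ hS Y x (add_comm 1 i) (hM.elim _ _)
  rw [ext_subsingleton_iff.1 hB y, Ext.comp_zero]

lemma ext_right_summand {X Y M : C} {n : ℕ} (i : M ⟶ Y) (r : Y ⟶ M) (hir : i ≫ r = 𝟙 M)
    (hY : Subsingleton (Ext X Y n)) : Subsingleton (Ext X M n) := by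
  refine ext_subsingleton_iff.2 fun x => ?_
  have hx : (x.comp (Ext.mk₀ i) (add_zero n)).comp (Ext.mk₀ r) (add_zero n) = x := by
    rw [Ext.comp_assoc_of_third_deg_zero, Ext.mk₀_comp_mk₀, hir, Ext.comp_mk₀_id]
  rw [← hx, ext_subsingleton_iff.1 hY (x.comp (Ext.mk₀ i) (add_zero n)), Ext.zero_comp]

lemma ext_left_iso {X X' Y : C} {n : ℕ} (e : X ≅ X')
    (hX : Subsingleton (Ext X Y n)) : Subsingleton (Ext X' Y n) := by
  refine ext_subsingleton_iff.2 fun x => ?_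
  have hx : (Ext.mk₀ e.inv).comp ((Ext.mk₀ e.hom).comp x (zero_add n)) (zero_add n) = x := by
    rw [Ext.mk₀_comp_mk₀_assoc, e.inv_hom_id, Ext.mk₀_id_comp]
  rw [← hx, ext_subsingleton_iff.1 hX ((Ext.mk₀ e.hom).comp x (zero_add n)), Ext.comp_zero]

lemma IsSES.split {A B M : C} (h : IsSES A B M) (hE : Subsingleton (Ext M A 1)) :
    Nonempty (B ≅ A ⊞ M) := by
  obtain ⟨f, g, zero, hS⟩ := h
  -- The identity of `M` lifts along `B ⟶ M`, as its image in `Ext M A 1` vanishes.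
  obtain ⟨y, hy⟩ := Ext.covariant_sequence_exact₃ M hS (Ext.mk₀ (𝟙 M)) (zero_add 1) (hE.elim _ _)
  obtain ⟨s, rfl⟩ := (Ext.mk₀_bijective _ _).2 y
  refine IsSES.iso_of_section hS s ((Ext.mk₀_bijective _ _).1 ?_)
  rw [← hy, Ext.mk₀_comp_mk₀]

/-- A split short exact sequence can be reversed. -/
lemma IsSES.symm_of_ext {A B M : C} (h : IsSES A B M) (hE : Subsingleton (Ext M A 1)) :
    IsSES M B A := by
  obtain ⟨e⟩ := h.split hE
  exact (isSES_biprod M A).of_iso (Limits.biprod.braiding M A ≪≫ e.symm) (Iso.refl _)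

lemma IsSES.summands_of_ext {A B M : C} (h : IsSES A B M) (hE : Subsingleton (Ext M A 1)) :
    (∃ (i : A ⟶ B) (r : B ⟶ A), i ≫ r = 𝟙 A) ∧ (∃ (i : M ⟶ B) (r : B ⟶ M), i ≫ r = 𝟙 M) := by
  obtain ⟨e⟩ := h.split hE
  exact ⟨⟨Limits.biprod.inl ≫ e.inv, e.hom ≫ Limits.biprod.fst, by simp⟩,
    ⟨Limits.biprod.inr ≫ e.inv, e.hom ≫ Limits.biprod.snd, by simp⟩⟩

end ExtLemmas

/-! ### Approximations for a left Frobenius pair -/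

omit [Abelian C] in
lemma ClosedUnderSummands.iso {P : C → Prop} (h : ClosedUnderSummands P) {A B : C} (e : A ≅ B)
    (hA : P A) : P B := h hA ⟨e.inv, e.hom, e.inv_hom_id⟩

/-- `M` has an `𝒳`-approximation with kernel in `ω^∧`: there is a short exact sequence
`0 → Y → X → M → 0` with `Y ∈ ω^∧` and `X ∈ 𝒳`. -/
def HasApprox (𝒳 ω : C → Prop) (M : C) : Prop :=
  ∃ Y X : C, ResClass ω Y ∧ 𝒳 X ∧ IsSES Y X M

/-- `M` has an `ω^∧`-coapproximation: there is a short exact sequence `0 → M → Y → X → 0` with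
`Y ∈ ω^∧` and `X ∈ 𝒳`. -/
def HasCoapprox (𝒳 ω : C → Prop) (M : C) : Prop :=
  ∃ Y X : C, ResClass ω Y ∧ 𝒳 X ∧ IsSES M Y X

lemma ResClass.of {P : C → Prop} {M : C} (h : P M) : ResClass P M := ⟨0, .of_iso h (Iso.refl M)⟩

lemma ResClass.step {P : C → Prop} {K W M : C} (hW : P W) (h : IsSES K W M) (hK : ResClass P K) :
    ResClass P M := hK.elim fun n hn => ⟨n + 1, .step hW h hn⟩

lemma HasApprox.iso {𝒳 ω : C → Prop} {M N : C} (e : M ≅ N) (hM : HasApprox 𝒳 ω M) :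
    HasApprox 𝒳 ω N := by
  obtain ⟨Y, X, hY, hX, hs⟩ := hM
  exact ⟨Y, X, hY, hX, hs.of_iso (Iso.refl _) e⟩

namespace IsLeftFrobenius

variable [HasExt.{w} C] {𝒳 ω : C → Prop} (h : IsLeftFrobenius 𝒳 ω)

include h

open Abelian

open scoped ZeroObject

lemma zero_mem {A : C} (hA : 𝒳 A) : ω (0 : C) := by
  obtain ⟨_, hω𝒳, hωs, -, hcog⟩ := h
  obtain ⟨W, A', hW, -, -⟩ := hcog hA
  exact hωs hW ⟨0, 0, Subsingleton.elim _ _⟩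

lemma ext_res {A M : C} (hA : 𝒳 A) (hM : ResClass ω M) :
    ∀ i : ℕ, 1 ≤ i → Subsingleton (Ext A M i) := by
  obtain ⟨n, hn⟩ := hM
  induction hn with
  | of_iso hW e =>
    exact fun i hi => ext_right_summand e.hom e.inv e.hom_inv_id (h.2.2.2.1 hA hW i hi)
  | step hW hs _ ih =>
    exact fun i hi => hs.ext_right₃ (h.2.2.2.1 hA hW i hi) (ih (i + 1) (by omega))

/-- The objects of `ω` are the `𝒳`-injective objects of `𝒳`: the embedding of such an object
into an object of `ω` splits. -/
lemma mem_of_ext {M : C} (hM : 𝒳 M) (hE : ∀ A, 𝒳 A → Subsingleton (Ext A M 1)) : ω M := by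
  obtain ⟨W, A', hW, hA', hs⟩ := h.2.2.2.2 hM
  exact h.2.2.1 hW (hs.summands_of_ext (hE A' hA')).1

lemma mem_iff (M : C) : (𝒳 M ∧ ResClass ω M) ↔ ω M :=
  ⟨fun ⟨h₁, h₂⟩ => h.mem_of_ext h₁ fun _ hA => h.ext_res hA h₂ 1 le_rfl,
    fun hM => ⟨h.2.1 hM, .of hM⟩⟩

lemma res_cover {M : C} (hM : ResClass ω M) :
    ∃ K W : C, ResClass ω K ∧ ω W ∧ IsSES K W M := by
  obtain ⟨n, hn⟩ := hM
  cases hn with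
  | of_iso hW e =>
    exact ⟨0, _, .of (h.zero_mem (h.2.1 hW)), ClosedUnderSummands.iso h.2.2.1 e.symm hW,
      isSES_zero_left M (Limits.isZero_zero C)⟩
  | step hW hs hK => exact ⟨_, _, ⟨_, hK⟩, hW, hs⟩

lemma mem_ext {A B M : C} (hs : IsSES A B M) (hA : ω A) (hM : ω M) : ω B :=
  h.mem_of_ext (h.1.1 hs (h.2.1 hA) (h.2.1 hM)) fun _ hX =>
    hs.ext_right₂ (h.2.2.2.1 hX hA 1 le_rfl) (h.2.2.2.1 hX hM 1 le_rfl)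

/-- `ω^∧` is closed under extensions `0 → Y → E → Y' → 0`, by induction on the length of a
resolution of `Y'`. -/
lemma res_ext {Y E Y' : C} (hs : IsSES Y E Y') (hY : ResClass ω Y) (hY' : ResClass ω Y') :
    ResClass ω E := by
  -- An extension of an object of `ω` by `Y` splits, so it covers `Y` with kernel in `ω`.
  have key : ∀ {Y E W : C}, IsSES Y E W → ResClass ω Y → ω W →
      ResClass ω E := by
    intro Y E W hs hY hW
    obtain ⟨K, W₀, hK, hW₀, hc⟩ := h.res_cover hY
    obtain ⟨P, hP₁, hP₂⟩ :=
      (hs.symm_of_ext (h.ext_res (h.2.1 hW) hY 1 le_rfl)).pullback hc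
    exact .step (h.mem_ext hP₂ hW hW₀) hP₁ hK
  obtain ⟨n, hn⟩ := hY'
  induction hn generalizing Y E with
  | of_iso hW e => exact key hs hY (ClosedUnderSummands.iso h.2.2.1 e.symm hW)
  | step hW hs' hK ih =>
    obtain ⟨P, hP₁, hP₂⟩ := hs.pullback hs'
    obtain ⟨K₁, W₁, hK₁, hW₁, hc⟩ := h.res_cover (key hP₂ hY hW)
    obtain ⟨L, hL₁, hL₂⟩ := hc.comp_epi hP₁
    exact .step hW₁ hL₂ (ih hL₁ hK₁)

lemma approx_of_mem {M : C} (hM : 𝒳 M) : HasApprox 𝒳 ω M :=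
  ⟨0, M, .of (h.zero_mem hM), hM, isSES_zero_left M (Limits.isZero_zero C)⟩

lemma approx_of_res {M : C} (hM : ResClass ω M) : HasApprox 𝒳 ω M := by
  obtain ⟨K, W, hK, hW, hs⟩ := h.res_cover hM
  exact ⟨K, W, hK, h.2.1 hW, hs⟩

lemma coapprox {M : C} (hM : HasApprox 𝒳 ω M) : HasCoapprox 𝒳 ω M := by
  obtain ⟨Y, X, hY, hX, hs⟩ := hM
  obtain ⟨W, X', hW, hX', hs'⟩ := h.2.2.2.2 hX
  obtain ⟨Q, hQ₁, hQ₂⟩ := hs.comp_mono hs'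
  exact ⟨Q, X', .step hW hQ₁ hY, hX', hQ₂⟩

lemma approx_of_coapprox {M : C} (hM : HasCoapprox 𝒳 ω M) : HasApprox 𝒳 ω M := by
  obtain ⟨Y, X, hY, hX, hs⟩ := hM
  obtain ⟨K, W, hK, hW, hs'⟩ := h.res_cover hY
  obtain ⟨L, hL₁, hL₂⟩ := hs'.comp_epi hs
  exact ⟨K, L, hK, h.1.2.2 hL₂ (h.2.1 hW) hX, hL₁⟩

lemma approx_ext {A B M : C} (hs : IsSES A B M) (hA : HasApprox 𝒳 ω A) (hM : HasApprox 𝒳 ω M) :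
    HasApprox 𝒳 ω B := by
  obtain ⟨Y, X, hY, hX, hs₁⟩ := hM
  obtain ⟨YA, XA, hYA, hXA, hs₂⟩ := h.coapprox hA
  -- `P` is an extension of `X` by `A` covering `B` with kernel `Y`; embedding `A` into `YA`
  -- turns it into a split extension `Q` of `X` by `YA`, which has an approximation `R`.
  obtain ⟨P, hP₁, hP₂⟩ := hs.pullback hs₁
  obtain ⟨Q, hQ₁, hQ₂⟩ := hP₂.pushout hs₂
  obtain ⟨K, W, hK, hW, hs₃⟩ := h.res_cover hYA
  obtain ⟨R, hR₁, hR₂⟩ := (hQ₂.symm_of_ext (h.ext_res hX hYA 1 le_rfl)).pullback hs₃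
  obtain ⟨L, hL₁, hL₂⟩ := hR₁.comp_epi hQ₁
  obtain ⟨Z, hZ₁, hZ₂⟩ := hL₁.comp_epi hP₁
  exact ⟨Z, L, h.res_ext hZ₁ hK hY,
    h.1.2.2 hL₂ (h.1.1 hR₂ hX (h.2.1 hW)) hXA, hZ₂⟩

lemma approx_cone {A B M : C} (hs : IsSES A B M) (hA : HasApprox 𝒳 ω A) (hB : HasApprox 𝒳 ω B) :
    HasApprox 𝒳 ω M := by
  obtain ⟨Y, X, hY, hX, hs₁⟩ := hB
  obtain ⟨L, hL₁, hL₂⟩ := hs₁.comp_epi hs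
  obtain ⟨Y', X', hY', hX', hs₂⟩ := h.coapprox (h.approx_ext hL₁ (h.approx_of_res hY) hA)
  obtain ⟨P, hP₁, hP₂⟩ := hL₂.pushout hs₂
  exact ⟨Y', P, hY', h.1.1 hP₁ hX hX', hP₂⟩

lemma approx_cocone {A B M : C} (hs : IsSES A B M) (hB : HasApprox 𝒳 ω B)
    (hM : HasApprox 𝒳 ω M) : HasApprox 𝒳 ω A := by
  obtain ⟨Y, X, hY, hX, hs₁⟩ := hM
  obtain ⟨P, hP₁, hP₂⟩ := hs.pullback hs₁
  obtain ⟨Y₂, X₂, hY₂, hX₂, hs₂⟩ := h.approx_ext hP₁ (h.approx_of_res hY) hB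
  obtain ⟨L, hL₁, hL₂⟩ := hs₂.comp_epi hP₂
  exact ⟨Y₂, L, hY₂, h.1.2.2 hL₂ hX₂ hX, hL₁⟩

/-! ### Direct summands and the thick closure -/

/-- Every object with an approximation has finite projective dimension relative to `ω`. -/
lemma exists_ext_bound {M : C} (hM : HasApprox 𝒳 ω M) :
    ∃ n : ℕ, ∀ W, ω W → ∀ i : ℕ, n < i → Subsingleton (Ext M W i) := by
  have hcone : ∀ {K X M : C} {n : ℕ}, IsSES K X M → 𝒳 X →
      (∀ W, ω W → ∀ i : ℕ, n < i → Subsingleton (Ext K W i)) →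
      ∀ W, ω W → ∀ i : ℕ, n + 1 < i → Subsingleton (Ext M W i) := by
    intro K X M n hs hX hK W hW i hi
    obtain ⟨j, rfl⟩ : ∃ j, i = j + 1 := ⟨i - 1, by omega⟩
    exact hs.ext_left₃ (hK W hW j (by omega)) (h.2.2.2.1 hX hW _ (by omega))
  obtain ⟨Y, X, ⟨m, hm⟩, hX, hs⟩ := hM
  refine ⟨m + 1, hcone hs hX ?_⟩
  clear hs hX
  induction hm with
  | of_iso hW e =>
    exact fun W' hW' i hi => ext_left_iso e.symm (h.2.2.2.1 (h.2.1 hW) hW' i hi)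
  | step hW hs' _ ih => exact hcone hs' (h.2.1 hW) ih

/-- An object with an approximation which is `ω`-acyclic lies in `𝒳`, as its approximation
splits. -/
lemma mem_of_ext_left {M : C} (hM : HasApprox 𝒳 ω M)
    (hE : ∀ W, ω W → ∀ i : ℕ, 0 < i → Subsingleton (Ext M W i)) : 𝒳 M := by
  obtain ⟨Y, X, ⟨m, hm⟩, hX, hs⟩ := hM
  have key : ∀ i : ℕ, 0 < i → Subsingleton (Ext M Y i) := by
    clear hs hX
    induction hm with
    | of_iso hW e => exact fun i hi => ext_right_summand e.hom e.inv e.hom_inv_id (hE _ hW i hi)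
    | step hW hs' _ ih => exact fun i hi => hs'.ext_right₃ (hE _ hW i hi) (ih (i + 1) (by omega))
  exact h.1.2.1 hX (hs.summands_of_ext (key 1 one_pos)).2

/-- Direct summands of objects with an approximation have one, by induction on a bound for the
projective dimension of `M ⊞ N` relative to `ω`. If `M₁` and `N₁` are the kernels of the composites of an approximation
of `M ⊞ N` with its two projections, then `M₁ ⊞ N₁` is a syzygy of `M ⊞ N`, which has smaller
dimension. -/
lemma approx_biprod (n : ℕ) {M N : C} (hZ : HasApprox 𝒳 ω (M ⊞ N))
    (hE : ∀ W, ω W → ∀ i : ℕ, n < i → Subsingleton (Ext (M ⊞ N) W i)) :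
    HasApprox 𝒳 ω M := by
  induction n generalizing M N with
  | zero =>
    exact h.approx_of_mem
      (h.1.2.1 (h.mem_of_ext_left hZ hE) ⟨Limits.biprod.inl, Limits.biprod.fst, by simp⟩)
  | succ n ih =>
    obtain ⟨Y, X, hY, hX, hs⟩ := id hZ
    have hM : IsSES N (M ⊞ N) M :=
      (isSES_biprod N M).of_iso (Limits.biprod.braiding N M) (Iso.refl _)
    obtain ⟨M₁, -, hM₁⟩ := hs.comp_epi hM
    obtain ⟨N₁, -, hN₁⟩ := hs.comp_epi (isSES_biprod M N)
    have hXX : 𝒳 (X ⊞ X) := h.1.1 (isSES_biprod X X) hX hX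
    have hsum := hM₁.biprod hN₁
    refine h.approx_cone hM₁ (ih (h.approx_cocone hsum (h.approx_of_mem hXX) hZ) ?_)
      (h.approx_of_mem hX)
    intro W hW i hi
    exact hsum.ext_left₁ (h.2.2.2.1 hXX hW i (by omega)) (hE W hW (i + 1) (by omega))

lemma approx_summand {Z M : C} (hZ : HasApprox 𝒳 ω Z) (i : M ⟶ Z) (r : Z ⟶ M)
    (hir : i ≫ r = 𝟙 M) : HasApprox 𝒳 ω M := by
  obtain ⟨N, ⟨e⟩⟩ := exists_complement i r hir
  have hMN := hZ.iso e
  obtain ⟨n, hn⟩ := h.exists_ext_bound hMN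
  exact h.approx_biprod n hMN hn

lemma approx_of_thick {M : C} (hM : ThickClosure 𝒳 M) : HasApprox 𝒳 ω M := by
  induction hM with
  | of hM => exact h.approx_of_mem hM
  | ext hs _ _ hA hX => exact h.approx_ext hs hA hX
  | cone hs _ _ hA hB => exact h.approx_cone hs hA hB
  | cocone hs _ _ hB hX => exact h.approx_cocone hs hB hX
  | summand _ i r hir hX => exact h.approx_summand hX i r hir

lemma thick_of_res {M : C} (hM : ResClass ω M) : ThickClosure 𝒳 M := by
  obtain ⟨n, hn⟩ := hM
  induction hn with
  | of_iso hW e => exact .summand (.of (h.2.1 hW)) e.hom e.inv e.hom_inv_id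
  | step hW hs _ ih => exact .cone hs ih (.of (h.2.1 hW))

/-- Among the objects with an approximation, `ω^∧` consists of the `𝒳`-injective ones: the middle
term of an approximation of such an object is `𝒳`-injective, hence lies in `ω`. -/
lemma res_of_ext {M : C} (hM : HasApprox 𝒳 ω M) (hE : ∀ A, 𝒳 A → Subsingleton (Ext A M 1)) :
    ResClass ω M := by
  obtain ⟨Y, X, hY, hX, hs⟩ := hM
  exact .step (h.mem_of_ext hX fun A hA => hs.ext_right₂ (h.ext_res hA hY 1 le_rfl) (hE A hA)) hs hY

lemma res_summands : ClosedUnderSummands (ResClass ω) := by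
  rintro Y M hY ⟨i, r, hir⟩
  exact h.res_of_ext (h.approx_summand (h.approx_of_res hY) i r hir)
    fun A hA => ext_right_summand i r hir (h.ext_res hA hY 1 le_rfl)

end IsLeftFrobenius

theorem stmt_15 [HasExt.{w} C] (𝒳 ω : C → Prop)
    (h : IsLeftFrobenius 𝒳 ω) :
    IsCompleteCotorsionPairIn (ThickClosure 𝒳) 𝒳 (ResClass ω) ∧
    ExtVanish 𝒳 (ResClass ω) ∧
    (∀ M : C, (𝒳 M ∧ ResClass ω M) ↔ ω M) := by
  refine ⟨⟨fun _ => .of, fun _ => h.thick_of_res, h.1.2.1, h.res_summands,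
    fun _ _ hA hB => h.ext_res hA hB 1 le_rfl, fun M hM => ?_⟩,
    fun _ _ hA hB => h.ext_res hA hB, h.mem_iff⟩
  have hM' := h.approx_of_thick hM
  exact ⟨hM', h.coapprox hM'⟩
end
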